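/- Let n ≥ 7 and let a, b ∈ [n] = {1,…,n} be such that |a − b| is congruent to 2 or −2 modulo n. Let A_n be the anticycle on n vertices, and let H be the graph obtained from A_n by removing the edges {a,b} and {(a+1 mod n), (b+1 mod n)} (where residues are taken in [n]) and adding the edge {(a+1 mod n), a}. Then the ideal I_H^s has linear quotients for s = 2 and for s = 3. -/

import Mathlib

open MvPolynomial

noncomputable section

/-- The edge ideal of a finite simple graph on vertex set `Fin n`
(vertex with index `v` corresponds to the vertex `v+1` of `[n]`). -/
def edgeIdeal (K : Type*) [Field K] {n : ℕ} (G : SimpleGraph (Fin n)) :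
    Ideal (MvPolynomial (Fin n) K) :=
  Ideal.span {p | ∃ i j : Fin n, G.Adj i j ∧ p = X i * X j}

/-- `d` is the exponent vector of a minimal monomial generator of `I`. -/
def IsMinGen {K : Type*} [Field K] {n : ℕ} (I : Ideal (MvPolynomial (Fin n) K))
    (d : Fin n →₀ ℕ) : Prop :=
  monomial d (1 : K) ∈ I ∧
    ∀ e : Fin n →₀ ℕ, e ≤ d → e ≠ d → monomial e (1 : K) ∉ I

/-- A list of exponent vectors `L = [d_1, …, d_r]` is a linear quotient ordering if
for every `i ≥ 2` the colon ideal `(x^{d_1}, …, x^{d_{i-1}}) : x^{d_i}` is generated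
by a subset of the variables. -/
def IsLinQuotOrder (K : Type*) [Field K] {n : ℕ} (L : List (Fin n →₀ ℕ)) : Prop :=
  ∀ i : Fin L.length, 0 < i.val →
    ∃ V : Set (Fin n),
      Submodule.colon
        (Ideal.span {m : MvPolynomial (Fin n) K |
          ∃ k : Fin L.length, k.val < i.val ∧ m = monomial (L.get k) 1})
        (Ideal.span {monomial (L.get i) (1 : K)}) =
      Ideal.span ((fun v : Fin n => (X v : MvPolynomial (Fin n) K)) '' V)

/-- A monomial ideal has linear quotients if it is principal or admits a
linear quotient ordering of its minimal monomial generators. -/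
def HasLinearQuotients {K : Type*} [Field K] {n : ℕ}
    (I : Ideal (MvPolynomial (Fin n) K)) : Prop :=
  (∃ p, I = Ideal.span {p}) ∨
    ∃ L : List (Fin n →₀ ℕ), L.Nodup ∧ (∀ d, d ∈ L ↔ IsMinGen I d) ∧ IsLinQuotOrder K L

/-- `lexLt d e` : the monomial `x^d` is lexicographically smaller than `x^e`
for the lexicographic order induced by `x_n > x_{n-1} > … > x_1`. -/
def lexLt {n : ℕ} (d e : Fin n →₀ ℕ) : Prop :=
  ∃ k : Fin n, d k < e k ∧ ∀ m : Fin n, k < m → d m = e m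

/-- `L` lists the minimal monomial generators of `I` in decreasing lexicographic order. -/
def LexDecMinGenOrder {K : Type*} [Field K] {n : ℕ} (I : Ideal (MvPolynomial (Fin n) K))
    (L : List (Fin n →₀ ℕ)) : Prop :=
  List.Pairwise (fun d e => lexLt e d) L ∧ ∀ d, d ∈ L ↔ IsMinGen I d

/-- The anticycle on `[m]` : `{i,j}` is an edge iff `i ≠ j` and `i - j ≢ ±1 (mod m)`. -/
def anticycle (m : ℕ) : SimpleGraph (Fin m) where
  Adj i j := i ≠ j ∧ (i.val + 1) % m ≠ j.val ∧ (j.val + 1) % m ≠ i.val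
  symm := ⟨fun i j h => ⟨h.1.symm, h.2.2, h.2.1⟩⟩
  loopless := ⟨fun i h => h.1 rfl⟩

/-- The anticycle on `[m]` regarded as a graph on the vertex set `[n]`. -/
def anticycleIn (n m : ℕ) : SimpleGraph (Fin n) where
  Adj i j := i ≠ j ∧ i.val < m ∧ j.val < m ∧ (i.val + 1) % m ≠ j.val ∧ (j.val + 1) % m ≠ i.val
  symm := ⟨fun i j h => ⟨h.1.symm, h.2.2.1, h.2.1, h.2.2.2.2, h.2.2.2.1⟩⟩
  loopless := ⟨fun i h => h.1 rfl⟩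

/-- The star on `[n]` with edges `{i, n}` for `1 ≤ i ≤ n - 3`
(in the `0`-indexed picture: edges `{i, n-1}` for `i ≤ n - 4`). -/
def starF (n : ℕ) : SimpleGraph (Fin n) :=
  SimpleGraph.fromRel (fun i j => i.val + 4 ≤ n ∧ j.val = n - 1)

/-- `AgreeOrder n s i j t` : the degree-`s` monomials with ascending (0-indexed)
index sequences `i` and `j` agree in order `t`. -/
def AgreeOrder (n s : ℕ) (i j : ℕ → Fin n) (t : ℕ) : Prop :=
  if t = 0 then j (s - 1) < i (s - 1)
  else (∀ l, s - t ≤ l → l ≤ s - 1 → i l = j l) ∧ i (s - t - 1) ≠ j (s - t - 1)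

/-!
The vertices of `H` can be numbered `0, …, n - 1` so that its complement is the cycle
`0, 1, …, n - 1` together with the chord `{n - 3, n - 1}`. For this numbering the monomials of
degree `2 * s` generating `I_H ^ s` are those whose exponents sum to at most `s` over every
independent set of `H`: writing such a monomial as `x_{y_1} ⋯ x_{y_{2s}}` with
`y_1 ≤ … ≤ y_{2s}`, these inequalities force each `{y_k, y_{k+s}}` to be an edge.

List first the monomials involving a variable at one of the positions `3, …, n - 2`, in decreasing
lexicographic order, then the remaining ones, in increasing lexicographic order. If `u` precedes
`v` in this list, then some `v * x_p / x_q` in which `v` has a smaller `x_p`-exponent than `u` is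
again in the list and precedes `v`. Hence the colon ideal at `v` is generated by variables, for
every `s ≥ 2`.
-/

section LinearQuotients

variable {σ R : Type*} [CommSemiring R]

theorem monomial_one_mem_span_monomial_image_iff [Nontrivial R] {S : Set (σ →₀ ℕ)} {d : σ →₀ ℕ} :
    monomial d (1 : R) ∈ Ideal.span ((fun e ↦ monomial e (1 : R)) '' S) ↔ ∃ e ∈ S, e ≤ d := by
  classical
  simp [mem_ideal_span_monomial_image, support_monomial]

theorem mul_monomial_one_mem_span_monomial_image_iff {S : Set (σ →₀ ℕ)} {v : σ →₀ ℕ}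
    {f : MvPolynomial σ R} :
    f * monomial v 1 ∈ Ideal.span ((fun e ↦ monomial e (1 : R)) '' S) ↔
      ∀ m ∈ f.support, ∃ w ∈ S, w ≤ v + m := by
  classical
  rw [mem_ideal_span_monomial_image]
  constructor
  · intro h m hm
    refine h (v + m) ?_
    rwa [mem_support_iff, add_comm, coeff_mul_monomial, mul_one, ← mem_support_iff]
  · intro h m hm
    rw [mem_support_iff, coeff_mul_monomial', mul_one, ne_eq, ite_eq_right_iff,
      Classical.not_imp] at hm
    simpa [add_tsub_cancel_of_le hm.1] using h (m - v) (mem_support_iff.2 hm.2)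

theorem colon_span_monomial_eq_span_X {S : Set (σ →₀ ℕ)} {v : σ →₀ ℕ}
    (h : ∀ u ∈ S, ∃ w ∈ S, ∃ p, v p < u p ∧ w ≤ v + Finsupp.single p 1) :
    (Ideal.span ((fun e ↦ monomial e (1 : R)) '' S)).colon (Ideal.span {monomial v (1 : R)}) =
      Ideal.span (X '' {p : σ | ∃ w ∈ S, w ≤ v + Finsupp.single p 1}) := by
  ext f
  rw [Ideal.mem_colon_span_singleton, mul_monomial_one_mem_span_monomial_image_iff,
    mem_ideal_span_X_image]
  refine forall₂_congr fun m _ ↦ ⟨?_, ?_⟩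
  · rintro ⟨u, huS, hu⟩
    obtain ⟨w, hwS, p, hp, hw⟩ := h u huS
    refine ⟨p, ⟨w, hwS, hw⟩, fun hm ↦ hp.not_ge ?_⟩
    simpa [hm] using hu p
  · rintro ⟨p, ⟨w, hwS, hw⟩, hm⟩
    have hpm : Finsupp.single p 1 ≤ m := Finsupp.single_le_iff.2 (Nat.one_le_iff_ne_zero.2 hm)
    exact ⟨w, hwS, hw.trans (add_le_add_right hpm v)⟩

end LinearQuotients

theorem isMinGen_span_monomial_image_iff {K : Type*} [Field K] {n : ℕ} {S : Set (Fin n →₀ ℕ)}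
    (hS : IsAntichain (· ≤ ·) S) {d : Fin n →₀ ℕ} :
    IsMinGen (Ideal.span ((fun e ↦ monomial e (1 : K)) '' S)) d ↔ d ∈ S := by
  simp only [IsMinGen, monomial_one_mem_span_monomial_image_iff]
  constructor
  · rintro ⟨⟨e, heS, hed⟩, hmin⟩
    by_cases hne : e = d
    · exact hne ▸ heS
    · exact absurd ⟨e, heS, le_rfl⟩ (hmin e hed hne)
  · rintro hd
    refine ⟨⟨d, hd, le_rfl⟩, ?_⟩
    rintro e hed hne ⟨c, hcS, hce⟩
    have hcd : c = d := hS.eq hcS hd (hce.trans hed)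
    exact hne (le_antisymm hed (hcd ▸ hce))

theorem hasLinearQuotients_of_exchange (K : Type*) [Field K] {n : ℕ} {α : Type*} [LinearOrder α]
    {S : Set (Fin n →₀ ℕ)} (hfin : S.Finite) (hanti : IsAntichain (· ≤ ·) S)
    {key : (Fin n →₀ ℕ) → α} (hkey : Function.Injective key)
    (hex : ∀ u ∈ S, ∀ v ∈ S, key u < key v →
      ∃ w ∈ S, key w < key v ∧ ∃ p, v p < u p ∧ w ≤ v + Finsupp.single p 1) :
    HasLinearQuotients (Ideal.span ((fun d ↦ monomial d (1 : K)) '' S)) := by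
  classical
  let r : (Fin n →₀ ℕ) → (Fin n →₀ ℕ) → Prop := fun d e ↦ key d ≤ key e
  have : IsTrans _ r := ⟨fun _ _ _ ↦ le_trans⟩
  have : Std.Antisymm r := ⟨fun _ _ h h' ↦ hkey (le_antisymm h h')⟩
  have : Std.Total r := ⟨fun _ _ ↦ le_total _ _⟩
  let L := hfin.toFinset.sort r
  have hmem (d) : d ∈ L ↔ d ∈ S := by simp [L]
  have hlt {k i : Fin L.length} : key (L.get k) < key (L.get i) ↔ k < i := by
    have hmono : StrictMono (fun i ↦ key (L.get i)) := fun a b hab ↦ by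
      refine lt_of_le_of_ne ((List.pairwise_iff_get.1 (Finset.pairwise_sort _ r)) a b hab) ?_
      exact fun h ↦ hab.ne ((Finset.sort_nodup _ r).injective_get (hkey h))
    exact hmono.lt_iff_lt
  refine .inr ⟨L, Finset.sort_nodup _ _, fun d ↦ ?_, fun i _ ↦ ?_⟩
  · rw [hmem, isMinGen_span_monomial_image_iff hanti]
  · have hpred : {m : MvPolynomial (Fin n) K | ∃ k : Fin L.length, k.val < i.val ∧
        m = monomial (L.get k) 1} =
        (fun d ↦ monomial d (1 : K)) '' {d ∈ S | key d < key (L.get i)} := by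
      ext m
      constructor
      · rintro ⟨k, hk, rfl⟩
        exact ⟨_, ⟨(hmem _).1 (L.get_mem k), hlt.2 hk⟩, rfl⟩
      · rintro ⟨d, ⟨hdS, hd⟩, rfl⟩
        obtain ⟨k, rfl⟩ := List.get_of_mem ((hmem d).2 hdS)
        exact ⟨k, hlt.1 hd, rfl⟩
    rw [hpred]
    refine ⟨_, colon_span_monomial_eq_span_X ?_⟩
    rintro u ⟨huS, hu⟩
    obtain ⟨w, hwS, hw, p, hp⟩ := hex u huS _ ((hmem _).1 (L.get_mem i)) hu
    exact ⟨w, ⟨hwS, hw⟩, p, hp⟩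

section EdgeProducts

open Finsupp

variable {V W : Type*}

/-- The exponent vectors of the products of `s` edges of `G`, repetitions allowed: `d` belongs to
this set iff it is the degree sequence of a multigraph with `s` edges, all of them edges of `G`. -/
def edgeProductExponents (G : SimpleGraph V) (s : ℕ) : Set (V →₀ ℕ) :=
  {d | ∃ y z : Fin s → V, (∀ k, G.Adj (y k) (z k)) ∧ d = ∑ k, (single (y k) 1 + single (z k) 1)}

theorem edgeIdeal_pow_eq_span (K : Type*) [Field K] {n : ℕ} (G : SimpleGraph (Fin n)) (s : ℕ) :
    edgeIdeal K G ^ s =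
      Ideal.span ((fun d ↦ monomial d (1 : K)) '' edgeProductExponents G s) := by
  rw [edgeIdeal, Ideal.span, Submodule.span_pow]
  congr 1
  ext m
  rw [Set.mem_pow]
  constructor
  · rintro ⟨e, rfl⟩
    choose y z hadj he using fun k ↦ (e k).2
    refine ⟨_, ⟨y, z, hadj, rfl⟩, ?_⟩
    simp [List.prod_ofFn, monomial_sum_one, he, X, monomial_mul]
  · rintro ⟨_, ⟨y, z, hadj, rfl⟩, rfl⟩
    refine ⟨fun k ↦ ⟨X (y k) * X (z k), y k, z k, hadj k, rfl⟩, ?_⟩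
    simp [List.prod_ofFn, monomial_sum_one, X, monomial_mul]

variable {G : SimpleGraph V} {s : ℕ} {d : V →₀ ℕ}

theorem degree_of_mem_edgeProductExponents (hd : d ∈ edgeProductExponents G s) :
    d.degree = 2 * s := by
  obtain ⟨y, z, -, rfl⟩ := hd
  simp [mul_comm]

theorem isAntichain_edgeProductExponents (G : SimpleGraph V) (s : ℕ) :
    IsAntichain (· ≤ ·) (edgeProductExponents G s) := by
  intro d hd e he hne hle
  obtain ⟨c, rfl⟩ := le_iff_exists_add.1 hle
  have hc : c.degree = 0 := by
    have := degree_of_mem_edgeProductExponents he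
    rw [degree.map_add, degree_of_mem_edgeProductExponents hd] at this
    omega
  exact hne (by rw [(degree_eq_zero_iff c).1 hc, add_zero])

theorem finite_edgeProductExponents [Finite V] (G : SimpleGraph V) (s : ℕ) :
    (edgeProductExponents G s).Finite :=
  (Finsupp.finite_of_degree_eq (2 * s)).subset fun _ ↦ degree_of_mem_edgeProductExponents

theorem sum_le_of_mem_edgeProductExponents {A : Finset V} (hA : G.IsIndepSet A)
    (hd : d ∈ edgeProductExponents G s) : ∑ i ∈ A, d i ≤ s := by
  classical
  obtain ⟨y, z, hadj, rfl⟩ := hd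
  calc ∑ i ∈ A, (∑ k, (single (y k) 1 + single (z k) 1) : V →₀ ℕ) i
      = ∑ k, ((if y k ∈ A then 1 else 0) + if z k ∈ A then 1 else 0) := by
        simp only [finsetSum_apply, Finsupp.add_apply]
        rw [Finset.sum_comm]
        simp [Finset.sum_add_distrib, single_apply]
    _ ≤ ∑ _k : Fin s, 1 := by
        refine Finset.sum_le_sum fun k _ ↦ ?_
        have : ¬ (y k ∈ A ∧ z k ∈ A) := fun h ↦ hA h.1 h.2 (hadj k).ne (hadj k)
        split_ifs <;> simp_all
    _ = s := by simp

theorem edgeProductExponents_map (τ : V ↪ W) (G : SimpleGraph V) (s : ℕ) :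
    edgeProductExponents (G.map τ) s = mapDomain τ '' edgeProductExponents G s := by
  ext d
  constructor
  · rintro ⟨y, z, hadj, rfl⟩
    choose y' z' hadj' hy hz using fun k ↦ (SimpleGraph.map_adj ..).1 (hadj k)
    refine ⟨_, ⟨y', z', hadj', rfl⟩, ?_⟩
    simp [mapDomain_finsetSum, mapDomain_add, hy, hz]
  · rintro ⟨_, ⟨y, z, hadj, rfl⟩, rfl⟩
    refine ⟨τ ∘ y, τ ∘ z, fun k ↦ SimpleGraph.map_adj_apply.2 (hadj k), ?_⟩
    simp [mapDomain_finsetSum, mapDomain_add]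

theorem mapDomain_mem_edgeProductExponents_map_iff (τ : V ↪ W) :
    mapDomain τ d ∈ edgeProductExponents (G.map τ) s ↔ d ∈ edgeProductExponents G s := by
  rw [edgeProductExponents_map, (mapDomain_injective τ.injective).mem_set_image]

end EdgeProducts

section Matching

open scoped Finset

open Finsupp

variable {V : Type*} [LinearOrder V]

theorem exists_monotone_eq_sum_single {f : V →₀ ℕ} {m : ℕ} (hf : f.degree = m) :
    ∃ y : Fin m → V, Monotone y ∧ f = ∑ k, single (y k) 1 := by
  have hlen : (f.toMultiset.sort (· ≤ ·)).length = m := by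
    rw [Multiset.length_sort, card_toMultiset, ← hf]; rfl
  subst hlen
  refine ⟨_, (Multiset.pairwise_sort f.toMultiset (· ≤ ·)).sortedLE.monotone_get, ?_⟩
  simp only [List.get_eq_getElem]
  rw [Fin.sum_univ_fun_getElem _ fun a ↦ single a 1]
  calc f = Multiset.toFinsupp (f.toMultiset.map fun a ↦ {a}).sum := by
        rw [Multiset.sum_map_singleton, toMultiset_toFinsupp]
    _ = (f.toMultiset.map fun a ↦ single a 1).sum := by
        simp only [map_multiset_sum, Multiset.map_map, Function.comp_def,
          Multiset.toFinsupp_singleton]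
    _ = _ := by
        rw [← Multiset.sum_coe, ← Multiset.map_coe, Multiset.sort_eq]

theorem sum_sum_single_apply {ι : Type*} [Fintype ι] (y : ι → V) (A : Finset V) :
    ∑ i ∈ A, (∑ k, single (y k) 1 : V →₀ ℕ) i = #{k | y k ∈ A} := by
  simp only [finsetSum_apply]
  rw [Finset.sum_comm]
  simp [single_apply]

theorem mem_edgeProductExponents_of_sum_Icc_le_or_le_sum_Ioo [LocallyFiniteOrder V]
    {G : SimpleGraph V} {s : ℕ} {f : V →₀ ℕ} (hdeg : f.degree = 2 * s)
    (hf : ∀ i j, i ≤ j → f i ≠ 0 → f j ≠ 0 → ¬ G.Adj i j →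
      ∑ k ∈ Finset.Icc i j, f k ≤ s ∨ s ≤ ∑ k ∈ Finset.Ioo i j, f k) :
    f ∈ edgeProductExponents G s := by
  obtain ⟨y, hy, rfl⟩ := exists_monotone_eq_sum_single (hdeg.trans (two_mul s))
  refine ⟨y ∘ Fin.castAdd s, y ∘ Fin.natAdd s, fun k ↦ ?_, ?_⟩
  swap
  · rw [Fin.sum_univ_add, ← Finset.sum_add_distrib]; rfl
  by_contra hadj
  have hlt : Fin.castAdd s k ≤ Fin.natAdd s k := Fin.le_def.2 (by simp)
  have hpos (l) : (∑ k, single (y k) 1 : V →₀ ℕ) (y l) ≠ 0 := by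
    rw [finsetSum_apply]
    exact (Finset.sum_pos' (fun _ _ ↦ Nat.zero_le _) ⟨l, Finset.mem_univ l, by simp⟩).ne'
  have hIcc : s + 1 ≤ #{l | y l ∈ Finset.Icc (y (Fin.castAdd s k)) (y (Fin.natAdd s k))} :=
    calc s + 1 = #(Finset.Icc (Fin.castAdd s k) (Fin.natAdd s k)) := by simp; omega
      _ ≤ _ := Finset.card_le_card fun l hl ↦ by
        rw [Finset.mem_Icc] at hl
        exact Finset.mem_filter.2 ⟨Finset.mem_univ _, Finset.mem_Icc.2 ⟨hy hl.1, hy hl.2⟩⟩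
  have hIoo : #{l | y l ∈ Finset.Ioo (y (Fin.castAdd s k)) (y (Fin.natAdd s k))} < s :=
    calc _ ≤ #(Finset.Ioo (Fin.castAdd s k) (Fin.natAdd s k)) :=
          Finset.card_le_card fun l hl ↦ by
            simp only [Finset.mem_filter, Finset.mem_univ, true_and, Finset.mem_Ioo] at hl
            exact Finset.mem_Ioo.2 ⟨hy.reflect_lt hl.1, hy.reflect_lt hl.2⟩
      _ < s := by simp; omega
  have := hf _ _ (hy hlt) (hpos _) (hpos _) hadj
  rw [sum_sum_single_apply, sum_sum_single_apply] at this
  omega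

end Matching

section Balanced

/-- The complement, on the vertices `0, …, n - 1` of `ℕ`, of the cycle `0, 1, …, n - 1` with the
chord `{n - 3, n - 1}`: for suitably numbered vertices this is the graph `H` of the theorem. -/
def chordedCycleCompl (n : ℕ) : SimpleGraph ℕ :=
  SimpleGraph.fromRel fun i j ↦ i + 1 < j ∧ j < n ∧ (j + 1 = n → i ≠ 0 ∧ i + 3 ≠ n)

/-- The inequalities cutting out the exponent vectors of the products of `s` edges of
`chordedCycleCompl n`: besides the support and degree conditions there is one bound for each of
its maximal independent sets `{i, i + 1}`, `{0, n - 1}` and `{n - 3, n - 2, n - 1}`. -/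
structure IsBalanced (n s : ℕ) (f : ℕ →₀ ℕ) : Prop where
  eq_zero : ∀ i, n ≤ i → f i = 0
  degree_eq : f.degree = 2 * s
  pair_le : ∀ i, i + 3 < n → f i + f (i + 1) ≤ s
  wrap_le : f 0 + f (n - 1) ≤ s
  triangle_le : f (n - 3) + f (n - 2) + f (n - 1) ≤ s

variable {n s : ℕ} {f : ℕ →₀ ℕ}

theorem chordedCycleCompl_adj {i j : ℕ} : (chordedCycleCompl n).Adj i j ↔
    (i + 1 < j ∧ j < n ∧ (j + 1 = n → i ≠ 0 ∧ i + 3 ≠ n)) ∨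
      (j + 1 < i ∧ i < n ∧ (i + 1 = n → j ≠ 0 ∧ j + 3 ≠ n)) := by
  rw [chordedCycleCompl, SimpleGraph.fromRel_adj]
  omega

theorem isBalanced_of_mem_edgeProductExponents (hn : 3 ≤ n)
    (hf : f ∈ edgeProductExponents (chordedCycleCompl n) s) : IsBalanced n s f where
  eq_zero i hi := by
    obtain ⟨y, z, hadj, rfl⟩ := hf
    rw [Finsupp.finsetSum_apply]
    refine Finset.sum_eq_zero fun k _ ↦ ?_
    have hk := hadj k
    rw [chordedCycleCompl_adj] at hk
    rw [Finsupp.add_apply, Finsupp.single_eq_of_ne (by omega), Finsupp.single_eq_of_ne (by omega),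
      add_zero]
  degree_eq := degree_of_mem_edgeProductExponents hf
  pair_le i _ := by
    have hind : (chordedCycleCompl n).IsIndepSet ({i, i + 1} : Finset ℕ) := by
      intro a ha b hb _
      rw [chordedCycleCompl_adj]
      simp only [Finset.mem_coe, Finset.mem_insert, Finset.mem_singleton] at ha hb
      omega
    simpa using sum_le_of_mem_edgeProductExponents hind hf
  wrap_le := by
    have hind : (chordedCycleCompl n).IsIndepSet ({0, n - 1} : Finset ℕ) := by
      intro a ha b hb _
      rw [chordedCycleCompl_adj]
      simp only [Finset.mem_coe, Finset.mem_insert, Finset.mem_singleton] at ha hb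
      omega
    have := sum_le_of_mem_edgeProductExponents hind hf
    rwa [Finset.sum_pair (by omega)] at this
  triangle_le := by
    have hind : (chordedCycleCompl n).IsIndepSet ({n - 3, n - 2, n - 1} : Finset ℕ) := by
      intro a ha b hb _
      rw [chordedCycleCompl_adj]
      simp only [Finset.mem_coe, Finset.mem_insert, Finset.mem_singleton] at ha hb
      omega
    have := sum_le_of_mem_edgeProductExponents hind hf
    rwa [Finset.sum_insert (by simp; omega), Finset.sum_pair (by omega), ← add_assoc] at this

theorem IsBalanced.lt_of_pos (hf : IsBalanced n s f) {i : ℕ} (hi : 0 < f i) : i < n :=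
  not_le.1 fun h ↦ hi.ne' (hf.eq_zero i h)

/-- The weight of `f` on the positions `3, …, n - 2`. -/
def middleWeight (n : ℕ) (f : ℕ →₀ ℕ) : ℕ := ∑ i ∈ Finset.Ico 3 (n - 1), f i

theorem IsBalanced.sum_range (hf : IsBalanced n s f) : ∑ i ∈ Finset.range n, f i = 2 * s := by
  rw [← hf.degree_eq, Finsupp.degree]
  refine (Finset.sum_subset (fun i hi ↦ ?_) fun i _ hi ↦ Finsupp.notMem_support_iff.1 hi).symm
  exact Finset.mem_range.2 (hf.lt_of_pos (Nat.pos_of_ne_zero (Finsupp.mem_support_iff.1 hi)))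

theorem IsBalanced.end_add_sum_Ioo_add_end (hf : IsBalanced n s f) (hn : 2 ≤ n) :
    f 0 + ∑ i ∈ Finset.Ioo 0 (n - 1), f i + f (n - 1) = 2 * s := by
  obtain ⟨m, rfl⟩ := Nat.exists_eq_add_of_le' hn
  rw [← hf.sum_range, Finset.sum_range_succ, Finset.range_eq_Ico,
    Finset.sum_eq_sum_Ico_succ_bot (by omega), Finset.Ico_add_one_left_eq_Ioo]
  rfl

theorem IsBalanced.weight_eq (hf : IsBalanced n s f) (hn : 4 ≤ n) :
    f 0 + f 1 + f 2 + middleWeight n f + f (n - 1) = 2 * s := by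
  obtain ⟨m, rfl⟩ := Nat.exists_eq_add_of_le' hn
  rw [← hf.sum_range, Finset.sum_range_succ,
    ← Finset.sum_range_add_sum_Ico f (by omega : 3 ≤ m + 3)]
  simp [Finset.sum_range_succ, middleWeight]

theorem mem_edgeProductExponents_chordedCycleCompl_iff (hn : 3 ≤ n) :
    f ∈ edgeProductExponents (chordedCycleCompl n) s ↔ IsBalanced n s f := by
  refine ⟨isBalanced_of_mem_edgeProductExponents hn, fun hf ↦
    mem_edgeProductExponents_of_sum_Icc_le_or_le_sum_Ioo hf.degree_eq fun i j hij hi hj hadj ↦ ?_⟩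
  have hjn : j < n := hf.lt_of_pos (Nat.pos_of_ne_zero hj)
  rw [chordedCycleCompl_adj] at hadj
  have htri := hf.triangle_le
  have hcases : j = i ∨ j = i + 1 ∨ (i = n - 3 ∧ j = n - 1) ∨ (i = 0 ∧ j = n - 1) := by omega
  rcases hcases with rfl | rfl | ⟨rfl, rfl⟩ | ⟨rfl, rfl⟩
  · left
    rw [Finset.Icc_self, Finset.sum_singleton]
    by_cases hin : j + 3 < n
    · exact (Nat.le_add_right _ _).trans (hf.pair_le j hin)
    · have hcases : j = n - 3 ∨ j = n - 2 ∨ j = n - 1 := by omega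
      rcases hcases with rfl | rfl | rfl <;> omega
  · left
    rw [Finset.sum_Icc_succ_top (by omega), Finset.Icc_self, Finset.sum_singleton]
    by_cases hin : i + 3 < n
    · exact hf.pair_le i hin
    · have hcases : i = n - 3 ∨ i + 1 = n - 1 ∧ i = n - 2 := by omega
      rcases hcases with rfl | ⟨h, rfl⟩
      · rw [show n - 3 + 1 = n - 2 by omega]; omega
      · rw [h]; omega
  · left
    obtain ⟨m, rfl⟩ := Nat.exists_eq_add_of_le' hn
    simpa [Finset.sum_Icc_succ_top, add_assoc] using htri
  · right
    have := hf.wrap_le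
    have := hf.end_add_sum_Ioo_add_end (by omega)
    omega

end Balanced

section Exchange

open Finsupp

variable {σ : Type*}

/-- The exponent vector of `x^v x_p / x_q`, meaningful when `x_q` divides `x^v x_p`. -/
def exchange (v : σ →₀ ℕ) (p q : σ) : σ →₀ ℕ := v + single p 1 - single q 1

variable {v : σ →₀ ℕ} {p q : σ}

theorem exchange_le (v : σ →₀ ℕ) (p q : σ) : exchange v p q ≤ v + single p 1 := tsub_le_self

theorem exchange_add_single (hq : 0 < v q) : exchange v p q + single q 1 = v + single p 1 :=
  tsub_add_cancel_of_le (le_add_right (single_le_iff.2 hq))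

theorem exchange_apply [DecidableEq σ] (hpq : p ≠ q) (i : σ) :
    exchange v p q i = if i = p then v i + 1 else if i = q then v i - 1 else v i := by
  simp only [exchange, tsub_apply, Finsupp.add_apply, single_apply]
  grind

theorem degree_exchange (hq : 0 < v q) : (exchange v p q).degree = v.degree := by
  simpa using congrArg degree (exchange_add_single (p := p) hq)

variable [LinearOrder σ]

theorem toLex_lt_toLex_exchange (hpq : p < q) : toLex v < toLex (exchange v p q) := by
  refine Finsupp.Lex.lt_iff.2 ⟨p, fun j hj ↦ ?_, ?_⟩
  · simp [exchange_apply hpq.ne, hj.ne, (hj.trans hpq).ne]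
  · simp [exchange_apply hpq.ne]

theorem toLex_exchange_lt_toLex (hqp : q < p) (hq : 0 < v q) :
    toLex (exchange v p q) < toLex v := by
  refine Finsupp.Lex.lt_iff.2 ⟨q, fun j hj ↦ ?_, ?_⟩
  · simp [exchange_apply hqp.ne', hj.ne, (hj.trans hqp).ne]
  · simp [exchange_apply hqp.ne', hqp.ne, hq]

end Exchange

section MiddleWeight

open Finsupp

variable {n s p q : ℕ} {v : ℕ →₀ ℕ}

theorem middleWeight_exchange (hq : 0 < v q) :
    middleWeight n (exchange v p q) + (if 3 ≤ q ∧ q < n - 1 then 1 else 0) =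
      middleWeight n v + if 3 ≤ p ∧ p < n - 1 then 1 else 0 := by
  have h := congrArg (middleWeight n) (exchange_add_single (p := p) hq)
  simpa [middleWeight, Finset.sum_add_distrib, single_apply] using h

theorem apply_le_middleWeight {i : ℕ} (h3 : 3 ≤ i) (hin : i < n - 1) : v i ≤ middleWeight n v :=
  Finset.single_le_sum (fun _ _ ↦ Nat.zero_le _) (Finset.mem_Ico.2 ⟨h3, hin⟩)

theorem apply_add_apply_le_middleWeight {i j : ℕ} (hij : i ≠ j) (hi : 3 ≤ i ∧ i < n - 1)
    (hj : 3 ≤ j ∧ j < n - 1) : v i + v j ≤ middleWeight n v :=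
  Finset.add_le_sum (fun _ _ ↦ Nat.zero_le _) (Finset.mem_Ico.2 hi) (Finset.mem_Ico.2 hj) hij

theorem exists_pos_of_middleWeight_ne_zero (hv : middleWeight n v ≠ 0) :
    ∃ i, 3 ≤ i ∧ i < n - 1 ∧ 0 < v i := by
  obtain ⟨i, hi, hvi⟩ := Finset.exists_ne_zero_of_sum_ne_zero hv
  exact ⟨i, (Finset.mem_Ico.1 hi).1, (Finset.mem_Ico.1 hi).2, Nat.pos_of_ne_zero hvi⟩

theorem IsBalanced.exchange (hn : 3 ≤ n) (hv : IsBalanced n s v) (hp : p < n) (hpq : p ≠ q)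
    (hq : 0 < v q)
    (hpair : ∀ i, i + 3 < n → p = i ∨ p = i + 1 → q ≠ i → q ≠ i + 1 → v i + v (i + 1) < s)
    (hwrap : p = 0 ∨ p = n - 1 → q ≠ 0 → q ≠ n - 1 → v 0 + v (n - 1) < s)
    (htriangle : n - 3 ≤ p → q < n - 3 → v (n - 3) + v (n - 2) + v (n - 1) < s) :
    IsBalanced n s (exchange v p q) where
  eq_zero i hi := by
    rw [exchange_apply hpq, hv.eq_zero i hi]
    grind
  degree_eq := (degree_exchange hq).trans hv.degree_eq
  pair_le i hi := by
    have := hv.pair_le i hi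
    have := hpair i hi
    simp only [exchange_apply hpq]
    grind
  wrap_le := by
    have := hv.wrap_le
    clear hpair htriangle
    simp only [exchange_apply hpq]
    grind
  triangle_le := by
    have := hv.triangle_le
    have := hv.lt_of_pos hq
    clear hpair hwrap
    simp only [exchange_apply hpq]
    grind

end MiddleWeight

section PositionKey

variable {n p q : ℕ} {u v : ℕ →₀ ℕ}

/-- Sorting by increasing `positionKey` puts the vectors with nonzero middle weight first, in
decreasing lexicographic order, followed by those with zero middle weight, in increasing
lexicographic order. -/
def positionKey (n : ℕ) (f : ℕ →₀ ℕ) : (Lex (ℕ →₀ ℕ))ᵒᵈ ⊕ₗ Lex (ℕ →₀ ℕ) :=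
  if middleWeight n f = 0 then Sum.inrₗ (toLex f) else Sum.inlₗ (OrderDual.toDual (toLex f))

theorem positionKey_injective (n : ℕ) : Function.Injective (positionKey n) := by
  intro u v h
  unfold positionKey at h
  split_ifs at h with hu hv hv
  · simpa using h
  · cases h
  · cases h
  · simpa using h

theorem positionKey_lt_iff : positionKey n u < positionKey n v ↔
    (middleWeight n u ≠ 0 ∧ middleWeight n v = 0) ∨
      (middleWeight n u ≠ 0 ∧ middleWeight n v ≠ 0 ∧ toLex v < toLex u) ∨
      (middleWeight n u = 0 ∧ middleWeight n v = 0 ∧ toLex u < toLex v) := by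
  unfold positionKey
  split_ifs <;> simp_all

end PositionKey

section EarlierExchange

open Finsupp

variable {n s p q : ℕ} {u v : ℕ →₀ ℕ}

/-- Some balanced vector with a smaller `positionKey` than `v` divides `v` times a variable whose
exponent in `u` exceeds that in `v`; this is the exchange property which forces linear
quotients. -/
def HasEarlierExchange (n s : ℕ) (u v : ℕ →₀ ℕ) : Prop :=
  ∃ w, IsBalanced n s w ∧ positionKey n w < positionKey n v ∧
    ∃ p, v p < u p ∧ w ≤ v + single p 1

theorem HasEarlierExchange.of_exchange (hw : IsBalanced n s (exchange v p q)) (hp : v p < u p)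
    (hkey : positionKey n (exchange v p q) < positionKey n v) : HasEarlierExchange n s u v :=
  ⟨exchange v p q, hw, hkey, p, hp, exchange_le v p q⟩

theorem HasEarlierExchange.of_first_lt (hn : 7 ≤ n) (hu : IsBalanced n s u)
    (hv : IsBalanced n s v) (hmid : middleWeight n v ≠ 0) (hagree : ∀ j < p, u j = v j)
    (hp : v p < u p) (hpq : p < q) (hq : 0 < v q)
    (hpair : p + 3 < n → q = p + 1 ∨ v p + v (p + 1) < s)
    (hwrap : p = 0 → q = n - 1 ∨ v 0 + v (n - 1) < s)
    (hkeep : 3 ≤ p ∨ q < 3 ∨ q = n - 1 ∨ 2 ≤ middleWeight n v) : HasEarlierExchange n s u v := by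
  have hqn := hv.lt_of_pos hq
  refine .of_exchange (p := p) (q := q) ?_ hp ?_
  · refine hv.exchange (by omega) (by omega) hpq.ne hq (fun i hi hpi _ hqi ↦ ?_) ?_ ?_
    · rcases hpi with rfl | rfl
      · exact (hpair hi).resolve_left hqi
      · have := hu.pair_le i hi
        have := hagree i (by omega)
        omega
    · omega
    · omega
  · have := middleWeight_exchange (n := n) (p := p) hq
    refine positionKey_lt_iff.2 (.inr (.inl ⟨?_, hmid, toLex_lt_toLex_exchange hpq⟩))
    split_ifs at this <;> omega

theorem HasEarlierExchange.of_last_pos (hn : 3 ≤ n) (hv : IsBalanced n s v) (hp : v p < u p)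
    (hpn : p < n - 1) (hlast : 0 < v (n - 1))
    (hpair : ∀ i, i + 3 < n → p = i ∨ p = i + 1 → v i + v (i + 1) < s)
    (hmid : middleWeight n v ≠ 0 ∨ 3 ≤ p) : HasEarlierExchange n s u v := by
  refine .of_exchange (p := p) (q := n - 1) ?_ hp ?_
  · exact hv.exchange hn (by omega) hpn.ne hlast (fun i hi hpi _ _ ↦ hpair i hi hpi)
      (by omega) (by omega)
  · have := middleWeight_exchange (n := n) (p := p) hlast
    have := toLex_lt_toLex_exchange (v := v) hpn
    rw [positionKey_lt_iff]
    grind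

theorem IsBalanced.exists_gt_lt (hu : IsBalanced n s u) (hv : IsBalanced n s v)
    (hagree : ∀ j < p, u j = v j) (hp : v p < u p) : ∃ q, p < q ∧ u q < v q := by
  by_contra! h
  refine (Finset.sum_lt_sum (fun j _ ↦ ?_) ⟨p, ?_, hp⟩).ne (hv.sum_range.trans hu.sum_range.symm)
  · rcases lt_trichotomy j p with hj | rfl | hj
    exacts [(hagree j hj).ge, hp.le, h j hj]
  · exact Finset.mem_range.2 (hu.lt_of_pos (pos_of_gt hp))

theorem IsBalanced.exists_gt_pos (hn : 7 ≤ n) (hs : 2 ≤ s) (hu : IsBalanced n s u)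
    (hv : IsBalanced n s v) (humid : middleWeight n u ≠ 0) (hvmid : middleWeight n v ≠ 0)
    (hagree : ∀ j < p, u j = v j) (hp : v p < u p) :
    ∃ q, p < q ∧ 0 < v q ∧ (3 ≤ p ∨ q < 3 ∨ q = n - 1 ∨ 2 ≤ middleWeight n v) := by
  by_cases hlarge : 3 ≤ p ∨ 2 ≤ middleWeight n v
  · obtain ⟨q, hpq, hq⟩ := hu.exists_gt_lt hv hagree hp
    exact ⟨q, hpq, pos_of_gt hq, by omega⟩
  by_contra! h
  have hlast : ¬ 0 < v (n - 1) := fun h0 ↦ (h (n - 1) (by omega) h0).2.2.1 rfl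
  have hlow (q : ℕ) (hpq : p < q) (hq : q < 3) : v q = 0 := by
    by_contra h0
    have := (h q hpq (Nat.pos_of_ne_zero h0)).2.1
    omega
  have huw := hu.weight_eq (by omega)
  have hvw := hv.weight_eq (by omega)
  have hu01 : u 0 + u 1 ≤ s := hu.pair_le 0 (by omega)
  have hv01 : v 0 + v 1 ≤ s := hv.pair_le 0 (by omega)
  have hcases : p = 0 ∨ p = 1 ∨ p = 2 := by omega
  rcases hcases with rfl | rfl | rfl
  · have := hlow 1 one_pos (by omega)
    have := hlow 2 two_pos (by omega)
    omega
  · have := hlow 2 one_lt_two (by omega)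
    omega
  · have := hagree 0 two_pos
    have := hagree 1 one_lt_two
    omega

theorem HasEarlierExchange.of_pair_eq_of_wrap_eq (hn : 7 ≤ n) (hu : IsBalanced n s u)
    (hv : IsBalanced n s v) (hmid : middleWeight n v ≠ 0) (h0 : v 0 < u 0)
    (hpair : v 0 + v 1 = s) (hwrap : v 0 + v (n - 1) = s) : HasEarlierExchange n s u v := by
  have hu01 : u 0 + u 1 ≤ s := hu.pair_le 0 (by omega)
  have huwrap := hu.wrap_le
  have huw := hu.weight_eq (by omega)
  have hvw := hv.weight_eq (by omega)
  have hsum (f : ℕ →₀ ℕ) : ∑ i ∈ Finset.Ico 2 (n - 1), f i = f 2 + middleWeight n f :=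
    Finset.sum_eq_sum_Ico_succ_bot (by omega) f
  obtain ⟨p, hp, hlt⟩ : ∃ p ∈ Finset.Ico 2 (n - 1), v p < u p :=
    Finset.exists_lt_of_sum_lt (by rw [hsum, hsum]; omega)
  rw [Finset.mem_Ico] at hp
  refine .of_last_pos (by omega) hv hlt hp.2 (by omega) (fun i hi hpi ↦ ?_) (.inl hmid)
  have hcases : i = 1 ∨ i = 2 ∨ 3 ≤ i := by omega
  rcases hcases with rfl | rfl | h3
  · change v 1 + v 2 < s
    omega
  · have : v 3 ≤ middleWeight n v := apply_le_middleWeight le_rfl (by omega)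
    change v 2 + v 3 < s
    omega
  · have : v i + v (i + 1) ≤ middleWeight n v :=
      apply_add_apply_le_middleWeight (by omega) (by omega) (by omega)
    omega

theorem HasEarlierExchange.of_middleWeight_eq_one (hn : 7 ≤ n) (hs : 2 ≤ s)
    (hu : IsBalanced n s u) (hv : IsBalanced n s v) (humid : middleWeight n u ≠ 0)
    (hvmid : middleWeight n v = 1) (h0 : u 0 = v 0) (h1 : u 1 = v 1) (h2 : v 2 < u 2)
    (hpair : v 2 + v 3 = s) : HasEarlierExchange n s u v := by
  have hu12 : u 1 + u 2 ≤ s := hu.pair_le 1 (by omega)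
  have hu23 : u 2 + u 3 ≤ s := hu.pair_le 2 (by omega)
  have huw := hu.weight_eq (by omega)
  have hvw := hv.weight_eq (by omega)
  have hv3 : v 3 ≤ middleWeight n v := apply_le_middleWeight le_rfl (by omega)
  have hv_middle (i : ℕ) (hi : 3 < i) (hin : i < n - 1) : v i = 0 := by
    have : v 3 + v i ≤ middleWeight n v :=
      apply_add_apply_le_middleWeight hi.ne (by omega) (by omega)
    omega
  obtain ⟨p, hp3, hpn, hp⟩ := exists_pos_of_middleWeight_ne_zero humid
  have hp3' : p ≠ 3 := by rintro rfl; omega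
  have hvp := hv_middle p (by omega) hpn
  refine .of_last_pos (p := p) (by omega) hv (by omega) hpn (by omega) (fun i hi hpi ↦ ?_)
    (.inr hp3)
  have : v i + v (i + 1) ≤ middleWeight n v :=
    apply_add_apply_le_middleWeight (by omega) (by omega) (by omega)
  omega

theorem HasEarlierExchange.of_middleWeight_ne_zero (hn : 7 ≤ n) (hs : 2 ≤ s)
    (hu : IsBalanced n s u) (hv : IsBalanced n s v) (humid : middleWeight n u ≠ 0)
    (hvmid : middleWeight n v ≠ 0) (hlt : toLex v < toLex u) : HasEarlierExchange n s u v := by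
  obtain ⟨p, hagree, hp⟩ := Finsupp.Lex.lt_iff.1 hlt
  replace hagree (j : ℕ) (hj : j < p) : u j = v j := (hagree j hj).symm
  replace hp : v p < u p := hp
  have hwrap_le := hv.wrap_le
  by_cases hpair : p + 3 < n ∧ v p + v (p + 1) = s
  · have hu_pair := hu.pair_le p hpair.1
    by_cases hwrap : p = 0 ∧ v 0 + v (n - 1) = s
    · obtain ⟨rfl, hwrap⟩ := hwrap
      exact .of_pair_eq_of_wrap_eq hn hu hv hvmid hp hpair.2 hwrap
    by_cases hone : p = 2 ∧ middleWeight n v = 1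
    · obtain ⟨rfl, hone⟩ := hone
      exact .of_middleWeight_eq_one hn hs hu hv humid hone (hagree 0 two_pos)
        (hagree 1 one_lt_two) hp hpair.2
    exact .of_first_lt hn hu hv hvmid hagree hp (Nat.lt_add_one p) (by omega) (by omega)
      (by omega) (by omega)
  have hpair_lt (h : p + 3 < n) : v p + v (p + 1) < s := by
    have := hv.pair_le p h
    omega
  by_cases hwrap : p = 0 ∧ v 0 + v (n - 1) = s
  · obtain ⟨rfl, hwrap⟩ := hwrap
    have := hu.wrap_le
    exact .of_first_lt (q := n - 1) hn hu hv hvmid hagree hp (by omega) (by omega) (by omega)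
      (by omega) (by omega)
  obtain ⟨q, hpq, hq, hkeep⟩ := hu.exists_gt_pos hn hs hv humid hvmid hagree hp
  exact .of_first_lt hn hu hv hvmid hagree hp hpq hq (by omega) (by omega) hkeep

theorem IsBalanced.of_middleWeight_eq_zero (hn : 5 ≤ n) (hv : IsBalanced n s v)
    (hmid : middleWeight n v = 0) :
    v 0 + v (n - 1) = s ∧ v 1 + v 2 = s ∧ ∀ i, 3 ≤ i → i < n - 1 → v i = 0 := by
  have hpair : v 1 + v 2 ≤ s := hv.pair_le 1 (by omega)
  have hwrap := hv.wrap_le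
  have hw := hv.weight_eq (by omega)
  refine ⟨by omega, by omega, fun i h3 hi ↦ ?_⟩
  have : v i ≤ middleWeight n v := apply_le_middleWeight h3 hi
  omega

theorem HasEarlierExchange.of_middleWeight_eq_zero_right (hn : 7 ≤ n) (hs : s ≠ 0)
    (hv : IsBalanced n s v) (humid : middleWeight n u ≠ 0) (hvmid : middleWeight n v = 0) :
    HasEarlierExchange n s u v := by
  obtain ⟨hv0, -, hv_middle⟩ := hv.of_middleWeight_eq_zero (by omega) hvmid
  obtain ⟨p, hp3, hpn, hup⟩ := exists_pos_of_middleWeight_ne_zero humid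
  have hp : v p < u p := by rwa [hv_middle p hp3 hpn]
  have hkey {q : ℕ} (hq : 0 < v q) (hq3 : q < 3) :
      positionKey n (exchange v p q) < positionKey n v := by
    have := middleWeight_exchange (n := n) (p := p) hq
    rw [if_neg (by omega), if_pos ⟨hp3, hpn⟩] at this
    exact positionKey_lt_iff.2 (.inl ⟨by omega, hvmid⟩)
  have hpair (i : ℕ) (hi : i + 3 < n) (hpi : p = i ∨ p = i + 1) (h2 : i = 2 → v 2 = 0) :
      v i + v (i + 1) < s := by
    have hvi : v i = 0 := by
      rcases eq_or_ne i 2 with rfl | hi2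
      exacts [h2 rfl, hv_middle i (by omega) (by omega)]
    have := hv_middle (i + 1) (by omega) (by omega)
    omega
  by_cases h2 : p = 3 ∧ 0 < v 2
  · obtain ⟨rfl, h2⟩ := h2
    refine .of_exchange (p := 3) (q := 2) ?_ hp (hkey h2 (by omega))
    exact hv.exchange (by omega) (by omega) (by omega) h2
      (fun i hi hpi hq _ ↦ hpair i hi hpi (by omega)) (by omega) (by omega)
  by_cases hlast : 0 < v (n - 1)
  · exact .of_last_pos (by omega) hv hp hpn hlast
      (fun i hi hpi ↦ hpair i hi hpi (by omega)) (.inr hp3)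
  · refine .of_exchange (p := p) (q := 0) ?_ hp (hkey (by omega) (by omega))
    have := hv_middle (n - 3) (by omega) (by omega)
    have := hv_middle (n - 2) (by omega) (by omega)
    exact hv.exchange (by omega) (by omega) (by omega) (by omega)
      (fun i hi hpi _ _ ↦ hpair i hi hpi (by omega)) (by omega) (by omega)

theorem HasEarlierExchange.of_middleWeight_eq_zero (hn : 7 ≤ n) (hu : IsBalanced n s u)
    (hv : IsBalanced n s v) (humid : middleWeight n u = 0) (hvmid : middleWeight n v = 0)
    (hlt : toLex u < toLex v) : HasEarlierExchange n s u v := by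
  obtain ⟨hu0, hu1, -⟩ := hu.of_middleWeight_eq_zero (by omega) humid
  obtain ⟨hv0, hv1, hv_middle⟩ := hv.of_middleWeight_eq_zero (by omega) hvmid
  have hkey {p q : ℕ} (hq : 0 < v q) (hqp : q < p) (hp : ¬ (3 ≤ p ∧ p < n - 1)) :
      positionKey n (exchange v p q) < positionKey n v := by
    have := middleWeight_exchange (n := n) (p := p) hq
    rw [if_neg hp] at this
    exact positionKey_lt_iff.2 (.inr (.inr ⟨by omega, hvmid, toLex_exchange_lt_toLex hqp hq⟩))
  obtain ⟨q, hagree, hq⟩ := Finsupp.Lex.lt_iff.1 hlt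
  replace hagree (j : ℕ) (hj : j < q) : u j = v j := hagree j hj
  replace hq : u q < v q := hq
  have hqn := hv.lt_of_pos (pos_of_gt hq)
  have hcases : q = 0 ∨ q = 1 ∨ q = 2 ∨ (3 ≤ q ∧ q < n - 1) ∨ q = n - 1 := by omega
  rcases hcases with rfl | rfl | rfl | ⟨h3, hqn⟩ | rfl
  · refine .of_exchange (p := n - 1) (q := 0) ?_ (by omega)
      (hkey (by omega) (by omega) (by omega))
    have := hv_middle (n - 3) (by omega) (by omega)
    have := hv_middle (n - 2) (by omega) (by omega)
    exact hv.exchange (by omega) (by omega) (by omega) (by omega) (by omega) (by omega) (by omega)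
  · refine .of_exchange (p := 2) (q := 1) ?_ (by omega)
      (hkey (by omega) (by omega) (by omega))
    refine hv.exchange (by omega) (by omega) (by omega) (by omega) (fun i hi hpi hqi _ ↦ ?_)
      (by omega) (by omega)
    obtain rfl : i = 2 := by omega
    have := hv_middle 3 le_rfl (by omega)
    change v 2 + v 3 < s
    omega
  · have := hagree 1 one_lt_two
    omega
  · have := hv_middle q h3 hqn
    omega
  · have := hagree 0 (by omega)
    omega

theorem HasEarlierExchange.of_positionKey_lt (hn : 7 ≤ n) (hs : 2 ≤ s) (hu : IsBalanced n s u)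
    (hv : IsBalanced n s v) (hkey : positionKey n u < positionKey n v) :
    HasEarlierExchange n s u v := by
  obtain ⟨hu0, hv0⟩ | ⟨hu0, hv0, hlt⟩ | ⟨hu0, hv0, hlt⟩ := positionKey_lt_iff.1 hkey
  · exact .of_middleWeight_eq_zero_right hn (by omega) hv hu0 hv0
  · exact .of_middleWeight_ne_zero hn hs hu hv hu0 hv0 hlt
  · exact .of_middleWeight_eq_zero hn hu hv hu0 hv0 hlt

end EarlierExchange

theorem map_iso_trans_val_eq_chordedCycleCompl {n : ℕ} {G : SimpleGraph (Fin n)}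
    (e : G ≃g (chordedCycleCompl n).comap (Fin.val : Fin n → ℕ)) :
    G.map (e.toEquiv.toEmbedding.trans Fin.valEmbedding) = chordedCycleCompl n := by
  ext i j
  rw [SimpleGraph.map_adj]
  constructor
  · rintro ⟨x, y, hxy, rfl, rfl⟩
    exact e.map_adj_iff.2 hxy
  · intro hij
    have hlt := chordedCycleCompl_adj.1 hij
    obtain ⟨x, hx⟩ := e.surjective ⟨i, by omega⟩
    obtain ⟨y, hy⟩ := e.surjective ⟨j, by omega⟩
    refine ⟨x, y, e.map_adj_iff.1 ?_, congrArg Fin.val hx, congrArg Fin.val hy⟩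
    rwa [hx, hy]

theorem hasLinearQuotients_edgeIdeal_pow_of_iso (K : Type*) [Field K] {n s : ℕ} (hn : 7 ≤ n)
    (hs : 2 ≤ s) {G : SimpleGraph (Fin n)}
    (e : G ≃g (chordedCycleCompl n).comap (Fin.val : Fin n → ℕ)) :
    HasLinearQuotients (edgeIdeal K G ^ s) := by
  let τ : Fin n ↪ ℕ := e.toEquiv.toEmbedding.trans Fin.valEmbedding
  have hmap : G.map τ = chordedCycleCompl n := map_iso_trans_val_eq_chordedCycleCompl e
  have hbal {d : Fin n →₀ ℕ} (hd : d ∈ edgeProductExponents G s) :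
      IsBalanced n s (d.mapDomain τ) := by
    rwa [← mem_edgeProductExponents_chordedCycleCompl_iff (by omega), ← hmap,
      mapDomain_mem_edgeProductExponents_map_iff]
  rw [edgeIdeal_pow_eq_span]
  refine hasLinearQuotients_of_exchange K (finite_edgeProductExponents G s)
    (isAntichain_edgeProductExponents G s) (key := fun d ↦ positionKey n (d.mapDomain τ))
    ((positionKey_injective n).comp (Finsupp.mapDomain_injective τ.injective)) ?_
  intro u hu v hv huv
  obtain ⟨w, hw, hwv, p, hp, hle⟩ :=
    HasEarlierExchange.of_positionKey_lt hn hs (hbal hu) (hbal hv) huv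
  rw [← mem_edgeProductExponents_chordedCycleCompl_iff (by omega), ← hmap,
    edgeProductExponents_map] at hw
  obtain ⟨w, hw, rfl⟩ := hw
  obtain ⟨p, rfl⟩ : ∃ x, τ x = p :=
    (e.surjective ⟨p, (hbal hu).lt_of_pos (pos_of_gt hp)⟩).imp fun _ ↦ congrArg Fin.val
  refine ⟨w, hw, hwv, p, ?_, fun i ↦ ?_⟩
  · simpa only [Finsupp.mapDomain_apply τ.injective] using hp
  · have := hle (τ i)
    rwa [← Finsupp.mapDomain_single (f := τ), ← Finsupp.mapDomain_add,
      Finsupp.mapDomain_apply τ.injective, Finsupp.mapDomain_apply τ.injective] at this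

section ModifiedAnticycle

variable {n : ℕ} [NeZero n]

/-- The graph `H` of the theorem, with the arithmetic of `Fin n` in place of residues. -/
def modifiedAnticycle (α β : Fin n) : SimpleGraph (Fin n) :=
  (anticycle n).deleteEdges {s(α, β), s(α + 1, β + 1)} ⊔ SimpleGraph.fromEdgeSet {s(α + 1, α)}

theorem val_add_one_mod_eq_iff {i j : Fin n} : (i.val + 1) % n = j.val ↔ i + 1 = j := by
  rw [Fin.ext_iff, Fin.val_add, Fin.val_one', Nat.add_mod_mod]

theorem modifiedAnticycle_adj {α β i j : Fin n} : (modifiedAnticycle α β).Adj i j ↔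
    ((i ≠ j ∧ i + 1 ≠ j ∧ j + 1 ≠ i) ∧ s(i, j) ≠ s(α, β) ∧ s(i, j) ≠ s(α + 1, β + 1)) ∨
      s(i, j) = s(α + 1, α) ∧ i ≠ j := by
  simp [modifiedAnticycle, anticycle, val_add_one_mod_eq_iff]

theorem nonempty_modifiedAnticycle_iso_of_map_add_one {e : Fin n ≃ Fin n}
    (he : ∀ i, e (i + 1) = e i + 1) (α β : Fin n) :
    Nonempty (modifiedAnticycle α β ≃g modifiedAnticycle (e α) (e β)) :=
  ⟨e, by simp [modifiedAnticycle_adj, ← he]⟩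

theorem nonempty_modifiedAnticycle_iso_of_map_add_one_add_one {e : Fin n ≃ Fin n}
    (he : ∀ i, e (i + 1) + 1 = e i) (α β : Fin n) :
    Nonempty (modifiedAnticycle α β ≃g modifiedAnticycle (e (α + 1)) (e (β + 1))) := by
  have hsucc (i j : Fin n) : e i + 1 = e j ↔ j + 1 = i := by
    rw [← he j, add_left_inj, e.apply_eq_iff_eq, eq_comm]
  have hmk (i j k l : Fin n) : s(e i, e j) = s(e k, e l) ↔ s(i, j) = s(k, l) := by simp
  refine ⟨e, fun {i j} ↦ ?_⟩
  simp only [modifiedAnticycle_adj, he, hsucc, hmk, e.apply_eq_iff_eq, ne_eq]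
  rw [Sym2.eq_swap (a := α) (b := α + 1)]
  tauto

theorem val_add_one_eq_iff {i j : Fin n} :
    i + 1 = j ↔ i.val + 1 = j.val ∨ i.val + 1 = n ∧ j.val = 0 := by
  rw [← val_add_one_mod_eq_iff]
  have := i.isLt
  rcases (Nat.add_one_le_of_lt this).lt_or_eq with h | h
  · rw [Nat.mod_eq_of_lt h]; omega
  · rw [h, Nat.mod_self]; omega

theorem nonempty_modifiedAnticycle_zero_two_iso (hn : 7 ≤ n) :
    Nonempty (modifiedAnticycle (0 : Fin n) 2 ≃g
      (chordedCycleCompl n).comap (Fin.val : Fin n → ℕ)) := by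
  have h1 : (1 : Fin n).val = 1 := by rw [Fin.val_one', Nat.mod_eq_of_lt (by omega)]
  have h2 : (2 : Fin n).val = 2 := Nat.mod_eq_of_lt (a := 2) (by omega)
  let e : Fin n ≃ Fin n := (Equiv.swap 1 2).trans (Equiv.neg (Fin n))
  have he (i : Fin n) : (e i).val =
      if i.val = 0 then 0 else if i.val = 1 then n - 2 else if i.val = 2 then n - 1 else n - i := by
    simp only [e, Equiv.trans_apply, Equiv.neg_apply, Equiv.swap_apply_def, Fin.ext_iff, h1, h2,
      Fin.val_neg, Fin.val_zero, apply_ite Fin.val]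
    grind
  refine ⟨e, fun {i j} ↦ ?_⟩
  have h3 : ((2 : Fin n) + 1).val = 3 := by
    rw [Fin.val_add, h1, h2, Nat.mod_eq_of_lt (by omega)]
  simp only [SimpleGraph.comap_adj, chordedCycleCompl_adj, he, modifiedAnticycle_adj, Sym2.eq_iff,
    val_add_one_eq_iff, zero_add, ne_eq]
  simp only [Fin.ext_iff, h1, h2, h3, Fin.val_zero]
  split_ifs <;> omega

theorem nonempty_modifiedAnticycle_iso (hn : 7 ≤ n) {α β : Fin n} (h : β = α + 2 ∨ α = β + 2) :
    Nonempty (modifiedAnticycle α β ≃g (chordedCycleCompl n).comap (Fin.val : Fin n → ℕ)) := by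
  obtain ⟨e⟩ := nonempty_modifiedAnticycle_zero_two_iso hn
  rcases h with rfl | rfl
  · obtain ⟨e'⟩ := nonempty_modifiedAnticycle_iso_of_map_add_one (e := Equiv.subRight α)
      (fun i ↦ add_sub_right_comm i 1 α) α (α + 2)
    rw [Equiv.subRight_apply, Equiv.subRight_apply, sub_self, add_sub_cancel_left] at e'
    exact ⟨e'.trans e⟩
  · obtain ⟨e'⟩ := nonempty_modifiedAnticycle_iso_of_map_add_one_add_one
      (e := Equiv.subLeft (β + 2 + 1)) (fun i ↦ by simp; abel) (β + 2) β
    rw [Equiv.subLeft_apply, Equiv.subLeft_apply, sub_self, add_sub_add_right_eq_sub,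
      add_sub_cancel_left] at e'
    exact ⟨e'.trans e⟩

end ModifiedAnticycle

section Residues

theorem modEq_add_two_or_of_abs_sub_modEq {n a b : ℤ}
    (h : |a - b| ≡ 2 [ZMOD n] ∨ |a - b| ≡ -2 [ZMOD n]) :
    b ≡ a + 2 [ZMOD n] ∨ a ≡ b + 2 [ZMOD n] := by
  have hsub : a - b ≡ 2 [ZMOD n] ∨ a - b ≡ -2 [ZMOD n] := by
    rcases abs_choice (a - b) with habs | habs <;> rw [habs] at h
    · exact h
    · exact h.symm.imp (fun h ↦ by simpa using h.neg) fun h ↦ by simpa using h.neg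
  refine hsub.symm.imp (fun h ↦ ?_) fun h ↦ ?_
  · simpa [← add_assoc] using (h.add_right (b + 2)).symm
  · simpa [add_comm] using h.add_right b

theorem mk_sub_one_eq_mk_sub_one_add_two {n a b : ℕ} [NeZero n] (ha : 1 ≤ a) (hb : 1 ≤ b)
    (han : a - 1 < n) (hbn : b - 1 < n) (h : (b : ℤ) ≡ a + 2 [ZMOD n]) :
    (⟨b - 1, hbn⟩ : Fin n) = ⟨a - 1, han⟩ + 2 := by
  have hmod : b - 1 ≡ a - 1 + 2 [MOD n] := by
    refine Nat.ModEq.add_right_cancel' 1 ?_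
    rw [Nat.sub_add_cancel hb, add_right_comm, Nat.sub_add_cancel ha]
    exact_mod_cast h
  ext
  change b - 1 = (a - 1 + 2 % n) % n
  rw [Nat.add_mod_mod, ← hmod, Nat.mod_eq_of_lt hbn]

end Residues

theorem modified_anticycle_square_cube_linear_quotients_general
    (K : Type*) [Field K] (n a b : ℕ) (hn : 7 ≤ n)
    (ha1 : 1 ≤ a) (han : a ≤ n) (hb1 : 1 ≤ b) (hbn : b ≤ n)
    (hab : |(a : ℤ) - (b : ℤ)| ≡ 2 [ZMOD (n : ℤ)] ∨ |(a : ℤ) - (b : ℤ)| ≡ -2 [ZMOD (n : ℤ)]) :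
    ∀ s : ℕ, 2 ≤ s →
      HasLinearQuotients
        ((edgeIdeal K
          (((anticycle n).deleteEdges
              {s(⟨a - 1, Nat.sub_one_lt_of_le ha1 han⟩, ⟨b - 1, Nat.sub_one_lt_of_le hb1 hbn⟩),
               s(⟨a % n, Nat.mod_lt _ (Nat.zero_lt_of_lt hn)⟩,
                 ⟨b % n, Nat.mod_lt _ (Nat.zero_lt_of_lt hn)⟩)}) ⊔
            SimpleGraph.fromEdgeSet
              {s(⟨a % n, Nat.mod_lt _ (Nat.zero_lt_of_lt hn)⟩,
                 ⟨a - 1, Nat.sub_one_lt_of_le ha1 han⟩)})) ^ s) := by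
  intro s hs
  have : NeZero n := ⟨by omega⟩
  have hsucc (c : ℕ) (hc1 : 1 ≤ c) (hcn : c - 1 < n) :
      (⟨c - 1, hcn⟩ : Fin n) + 1 = ⟨c % n, Nat.mod_lt _ (Nat.zero_lt_of_lt hn)⟩ :=
    val_add_one_mod_eq_iff.1 (by rw [Nat.sub_add_cancel hc1])
  have han' : a - 1 < n := Nat.sub_one_lt_of_le ha1 han
  have hbn' : b - 1 < n := Nat.sub_one_lt_of_le hb1 hbn
  have hdist : (⟨b - 1, hbn'⟩ : Fin n) = ⟨a - 1, han'⟩ + 2 ∨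
      (⟨a - 1, han'⟩ : Fin n) = ⟨b - 1, hbn'⟩ + 2 :=
    (modEq_add_two_or_of_abs_sub_modEq hab).imp
      (mk_sub_one_eq_mk_sub_one_add_two ha1 hb1 han' hbn')
      (mk_sub_one_eq_mk_sub_one_add_two hb1 ha1 hbn' han')
  obtain ⟨e⟩ := nonempty_modifiedAnticycle_iso hn hdist
  rw [← hsucc a ha1 han', ← hsucc b hb1 hbn']
  exact hasLinearQuotients_edgeIdeal_pow_of_iso K hn hs e

/-- Theorem A / Theorem `cor1`: for `n ≥ 7` and `a, b ∈ [n]` with `|a - b| ≡ ±2 (mod n)`,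
removing the edges `{a, b}` and `{a+1 mod n, b+1 mod n}` from the anticycle `A_n` and
adding the edge `{a+1 mod n, a}` yields a graph `H` with `I_H^s` having linear quotients
for `s = 2, 3`.  (Vertex `v ∈ [n]` corresponds to the index `v - 1` of `Fin n`; the
vertex `(c mod n) ∈ [n]` for `c = a + 1` corresponds to the index `a % n`.) -/
theorem modified_anticycle_square_cube_linear_quotients
    (K : Type*) [Field K] (n a b : ℕ) (hn : 7 ≤ n)
    (ha1 : 1 ≤ a) (han : a ≤ n) (hb1 : 1 ≤ b) (hbn : b ≤ n)
    (hab : |(a : ℤ) - (b : ℤ)| ≡ 2 [ZMOD (n : ℤ)] ∨ |(a : ℤ) - (b : ℤ)| ≡ -2 [ZMOD (n : ℤ)]) :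
    ∀ s : ℕ, s = 2 ∨ s = 3 →
      HasLinearQuotients
        ((edgeIdeal K
          (((anticycle n).deleteEdges
              {s(⟨a - 1, by omega⟩, ⟨b - 1, by omega⟩),
               s(⟨a % n, Nat.mod_lt _ (by omega)⟩, ⟨b % n, Nat.mod_lt _ (by omega)⟩)}) ⊔
            SimpleGraph.fromEdgeSet
              {s(⟨a % n, Nat.mod_lt _ (by omega)⟩, ⟨a - 1, by omega⟩)})) ^ s) := by
  intro s hs
  exact modified_anticycle_square_cube_linear_quotients_general K n a b hn ha1 han hb1 hbn hab s
    (by omega)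

end
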